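/- arXiv:math/9810196 — 2 statements merged into one kernel-verified Lean document; each statement's English description precedes it below -/
import Mathlib

section
/- Let r > 0 and let f be holomorphic on the disc D(0,r) with f(0) = 0, f'(0) = 0, f''(0) = 2α ≠ 0 (i.e. f(z) = αz²(1 + o(z)) with α ≠ 0), and f'(z) ≠ 0 for 0 < |z| < r. Then the Schwarzian derivative S_f, which is holomorphic on the punctured disc, has a Laurent expansion at 0 of the form S_f(z) = −3/(2z²) + b/z + a₀ + a₁z + ⋯, i.e. z ↦ S_f(z) + 3/(2z²) − b/z extends holomorphically to 0 with value a₀ for suitable b, a₀ ∈ ℂ, and moreover the coefficients satisfy b² + 2a₀ = 0. -/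
/-!
Write `S_f = N' - N² / 2` with `N = f'' / f'` the logarithmic derivative of `f'`. If
`f' = (z - c)ᵐ g` with `g(c) ≠ 0`, then `N = m / (z - c) + u` where `u = g' / g` is holomorphic, and
`S_f = -m (m + 2) / (2 (z - c)²) - m u / (z - c) + u' - u² / 2`. With `u = u(c) + (z - c) v`, this
gives `b = -m u(c)` and `h = u' - m v - u² / 2`. Since `v(c) = u'(c)`, the derivative terms of
`h(c)` cancel for `m = 1`, the branch points of order two, where `g(c) = f''(c)`.
-/

open Complex Metric

/-- The Schwarzian derivative `S_f = f'''/f' - (3/2) (f''/f')²`. -/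
noncomputable def schwarzian (f : ℂ → ℂ) (z : ℂ) : ℂ :=
  iteratedDeriv 3 f z / deriv f z - (3 / 2) * (iteratedDeriv 2 f z / deriv f z) ^ 2

open scoped Topology

theorem dslope_ne_zero {𝕜 E : Type*} [NontriviallyNormedField 𝕜] [NormedAddCommGroup E]
    [NormedSpace 𝕜 E] {F : 𝕜 → E} {c z : 𝕜} (hc : deriv F c ≠ 0) (hz : z ≠ c → F z ≠ F c) :
    dslope F c z ≠ 0 := by
  rcases eq_or_ne z c with rfl | hzc
  · rwa [dslope_same]
  · rw [dslope_of_ne F hzc, Ne, slope_eq_zero_iff]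
    exact (hz hzc).symm

theorem logDeriv_sub_zpow_mul {𝕜 : Type*} [NontriviallyNormedField 𝕜] {g : 𝕜 → 𝕜} {c z : 𝕜}
    (m : ℤ) (hzc : z ≠ c) (hg : DifferentiableAt 𝕜 g z) (hgz : g z ≠ 0) :
    logDeriv (fun w ↦ (w - c) ^ m * g w) z = m / (z - c) + logDeriv g z := by
  have hzc' : z - c ≠ 0 := sub_ne_zero.mpr hzc
  have hsub : DifferentiableAt 𝕜 (fun w ↦ w - c) z := by fun_prop
  calc logDeriv (fun w ↦ (w - c) ^ m * g w) z
      = logDeriv (fun w ↦ (w - c) ^ m) z + logDeriv g z :=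
        logDeriv_mul z (zpow_ne_zero m hzc') hgz
          (DifferentiableAt.zpow hsub (.inl hzc')) hg
    _ = m / (z - c) + logDeriv g z := by
        rw [logDeriv_fun_zpow hsub]
        simp [logDeriv_apply, div_eq_mul_inv]

theorem schwarzian_eq_deriv_logDeriv {f : ℂ → ℂ} {z : ℂ} (hf : AnalyticAt ℂ (deriv f) z)
    (hfz : deriv f z ≠ 0) :
    schwarzian f z = deriv (logDeriv (deriv f)) z - logDeriv (deriv f) z ^ 2 / 2 := by
  have hN : deriv (logDeriv (deriv f)) z =
      (deriv (deriv (deriv f)) z * deriv f z - deriv (deriv f) z * deriv (deriv f) z) /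
        deriv f z ^ 2 :=
    deriv_div hf.deriv.differentiableAt hf.differentiableAt hfz
  simp only [schwarzian, iteratedDeriv_succ, iteratedDeriv_zero, hN, logDeriv_apply]
  field_simp
  ring

theorem schwarzian_eq_of_deriv_eventuallyEq_zpow_mul {f g : ℂ → ℂ} {c z : ℂ} {m : ℤ}
    (hzc : z ≠ c) (hg : AnalyticAt ℂ g z) (hgz : g z ≠ 0)
    (hfg : deriv f =ᶠ[𝓝 z] fun w ↦ (w - c) ^ m * g w) :
    schwarzian f z = -(m * (m + 2)) / (2 * (z - c) ^ 2) - m * logDeriv g z / (z - c) +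
      (deriv (logDeriv g) z - logDeriv g z ^ 2 / 2) := by
  have hzc' : z - c ≠ 0 := sub_ne_zero.mpr hzc
  have hsub : AnalyticAt ℂ (fun w ↦ w - c) z := by fun_prop
  have hf : AnalyticAt ℂ (deriv f) z := ((hsub.fun_zpow hzc').mul hg).congr hfg.symm
  have hfz : deriv f z ≠ 0 := by
    rw [hfg.eq_of_nhds]
    exact mul_ne_zero (zpow_ne_zero m hzc') hgz
  have hN : logDeriv (deriv f) =ᶠ[𝓝 z] fun w ↦ m / (w - c) + logDeriv g w := by
    filter_upwards [logDeriv_congr_nhds hfg, eventually_ne_nhds hzc, hg.eventually_analyticAt,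
      hg.continuousAt.eventually_ne hgz] with w hfgw hwc hgw hgw0
    rw [hfgw, logDeriv_sub_zpow_mul m hwc hgw.differentiableAt hgw0]
  have hu : DifferentiableAt ℂ (logDeriv g) z :=
    hg.deriv.differentiableAt.div hg.differentiableAt hgz
  have hpole : HasDerivAt (fun w ↦ (m : ℂ) / (w - c)) (-m / (z - c) ^ 2) z := by
    simpa using (hasDerivAt_const z (m : ℂ)).fun_div ((hasDerivAt_id z).sub_const c) hzc'
  rw [schwarzian_eq_deriv_logDeriv hf hfz, hN.deriv_eq, hN.eq_of_nhds,
    (hpole.fun_add hu.hasDerivAt).deriv]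
  field_simp
  ring

theorem schwarzian_branch_point_laurent_general {U : Set ℂ} (hU : IsOpen U) {c : ℂ} (hc : c ∈ U)
    {f : ℂ → ℂ} (hf : DifferentiableOn ℂ f U) (hf'c : deriv f c = 0)
    (hf''c : iteratedDeriv 2 f c ≠ 0) (hf' : ∀ z ∈ U, z ≠ c → deriv f z ≠ 0) :
    ∃ b : ℂ, ∃ h : ℂ → ℂ, DifferentiableOn ℂ h U ∧
      (∀ z ∈ U, z ≠ c → schwarzian f z = -3 / (2 * (z - c) ^ 2) + b / (z - c) + h z) ∧
      b ^ 2 + 2 * h c = 0 := by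
  set g := dslope (deriv f) c
  set u := logDeriv g
  have hfg (w : ℂ) : deriv f w = (w - c) ^ (1 : ℤ) * g w := by
    rw [zpow_one]
    exact (sub_smul_dslope_of_zero hf'c w).symm
  have hg : DifferentiableOn ℂ g U :=
    (differentiableOn_dslope (hU.mem_nhds hc)).mpr (hf.deriv hU)
  have hg0 (z : ℂ) (hz : z ∈ U) : g z ≠ 0 :=
    dslope_ne_zero (by simpa [iteratedDeriv_succ] using hf''c) (by simpa [hf'c] using hf' z hz)
  have hu : DifferentiableOn ℂ u U := (hg.deriv hU).div hg hg0
  refine ⟨-u c, fun z ↦ deriv u z - dslope u c z - u z ^ 2 / 2, ?_, fun z hz hzc ↦ ?_, ?_⟩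
  · exact ((hu.deriv hU).sub ((differentiableOn_dslope (hU.mem_nhds hc)).mpr hu)).sub
      ((hu.pow 2).div_const 2)
  · have hv : u z / (z - c) = u c / (z - c) + dslope u c z := by
      rw [dslope_of_ne u hzc, slope_def_field]
      ring
    calc schwarzian f z
        = -3 / (2 * (z - c) ^ 2) - u z / (z - c) + (deriv u z - u z ^ 2 / 2) := by
          rw [schwarzian_eq_of_deriv_eventuallyEq_zpow_mul hzc (hg.analyticAt (hU.mem_nhds hz))
            (hg0 z hz) (.of_forall hfg)]
          norm_num [u]
      _ = -3 / (2 * (z - c) ^ 2) + -u c / (z - c) +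
            (deriv u z - dslope u c z - u z ^ 2 / 2) := by
          rw [hv]
          ring
  · simp only [dslope_same]
    ring

/-- If `f` is holomorphic on the disc `D(0,r)` with a branch point of order two at the
origin (`f z = α z² (1 + o(z))`, `α ≠ 0`) and `f' ≠ 0` on the punctured disc, then its
Schwarzian derivative has a Laurent expansion
`S_f(z) = -3/(2 z²) + b/z + a₀ + a₁ z + ⋯` at `0`, i.e. `S_f(z) + 3/(2z²) - b/z` extends
holomorphically to the full disc, and the coefficients satisfy `b² + 2 a₀ = 0`. -/
theorem schwarzian_branch_point_laurent (r : ℝ) (hr : 0 < r) (α : ℂ) (hα : α ≠ 0)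
    (f : ℂ → ℂ) (hf : DifferentiableOn ℂ f (ball (0 : ℂ) r))
    (hf0 : f 0 = 0) (hf'0 : deriv f 0 = 0) (hf''0 : iteratedDeriv 2 f 0 = 2 * α)
    (hf' : ∀ z ∈ ball (0 : ℂ) r, z ≠ 0 → deriv f z ≠ 0) :
    ∃ b : ℂ, ∃ h : ℂ → ℂ, DifferentiableOn ℂ h (ball (0 : ℂ) r) ∧
      (∀ z ∈ ball (0 : ℂ) r, z ≠ 0 →
        schwarzian f z = -3 / (2 * z ^ 2) + b / z + h z) ∧
      b ^ 2 + 2 * h 0 = 0 := by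
  simpa only [sub_zero] using schwarzian_branch_point_laurent_general isOpen_ball
    (mem_ball_self hr) hf hf'0 (hf''0 ▸ mul_ne_zero two_ne_zero hα) hf'
end

section
/- Let U ⊆ ℂ be a nonempty open connected set, and let f, g be holomorphic on U with f'(z) ≠ 0 and g'(z) ≠ 0 for all z ∈ U. If the Schwarzian derivatives agree, S_f(z) = S_g(z) for all z ∈ U, then g is obtained from f by post-composition with a Möbius transformation: there exist a, b, c, d ∈ ℂ with ad − bc = 1 such that c·f(z) + d ≠ 0 and g(z) = (a·f(z) + b)/(c·f(z) + d) for all z ∈ U. -/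
/-!
Write `P_f = f''/f'`, so that `S_f = P_f' - P_f²/2`. If `S_f = S_g`, then `D = P_g - P_f` satisfies
`D' = D (P_f + P_g) / 2`. Here `P_f + P_g` is the logarithmic derivative of `f' g'`, so
`D² = k f' g'` for a constant `k`, and `D` vanishes either identically or nowhere.

* If `k = 0`, then `f'` and `g'` have the same logarithmic derivative, and `g` is affine in `f`.
* If `k ≠ 0`, the Möbius map `T` to be found has a finite pole `p` and a finite value `q` at `∞`.
  For each `z`, the Möbius map that carries the 2-jet of `f` at `z` to that of `g` has its pole at
  `f z + 2 f' z / D z`, and its inverse has its pole at `g z - 2 g' z / D z`. The equation for `D`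
  makes both expressions constant. With `p` and `q` their values, `(p - f) (q - g) = -4 f' g' / D²`,
  which is the constant `-4 / k`, so the graph of `T` is a hyperbola.

Squaring `D` replaces the solutions `1 / √f'` and `f / √f'` of `y'' + (S_f / 2) y = 0`, whose
branches need not exist when `U` is not simply connected.
-/

open Complex Metric

section Moebius

variable {α K : Type*} [Field K] {f g : α → K} {s : Set α}

/-- `g` is the composition of `f` with a Möbius transformation over `K` on `s`, whose pole is not
a value of `f` on `s`. The Möbius transformation is encoded by its four coefficients, with nonzero
determinant. -/
def IsMoebiusPostcompOn (f g : α → K) (s : Set α) : Prop :=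
  ∃ a b c d : K, a * d - b * c ≠ 0 ∧
    ∀ x ∈ s, c * f x + d ≠ 0 ∧ g x = (a * f x + b) / (c * f x + d)

lemma IsMoebiusPostcompOn.exists_det_eq_one [IsAlgClosed K] (h : IsMoebiusPostcompOn f g s) :
    ∃ a b c d : K, a * d - b * c = 1 ∧
      ∀ x ∈ s, c * f x + d ≠ 0 ∧ g x = (a * f x + b) / (c * f x + d) := by
  obtain ⟨a, b, c, d, hdet, hg⟩ := h
  obtain ⟨r, hr⟩ := IsAlgClosed.exists_pow_nat_eq (a * d - b * c) two_pos
  have hr0 : r ≠ 0 := by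
    rintro rfl
    exact hdet (by rw [← hr, zero_pow two_ne_zero])
  refine ⟨a / r, b / r, c / r, d / r, ?_, fun x hx ↦ ?_⟩
  · rw [div_mul_div_comm, div_mul_div_comm, ← sub_div, ← hr, ← sq, div_self (pow_ne_zero 2 hr0)]
  · obtain ⟨hden, hgx⟩ := hg x hx
    rw [div_mul_eq_mul_div, div_mul_eq_mul_div, ← add_div, ← add_div, div_div_div_cancel_right₀ hr0]
    exact ⟨div_ne_zero hden hr0, hgx⟩

lemma isMoebiusPostcompOn_of_eq_mul_add {m b : K} (hm : m ≠ 0) (h : ∀ x ∈ s, g x = m * f x + b) :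
    IsMoebiusPostcompOn f g s :=
  ⟨m, b, 0, 1, by simpa using hm, fun x hx ↦ by simpa using h x hx⟩

lemma isMoebiusPostcompOn_of_sub_mul_sub_eq {p q r : K} (hr : r ≠ 0)
    (h : ∀ x ∈ s, (p - f x) * (q - g x) = r) : IsMoebiusPostcompOn f g s := by
  refine ⟨-q, p * q - r, -1, p, by ring_nf; exact neg_ne_zero.2 hr, fun x hx ↦ ?_⟩
  have hden : -1 * f x + p ≠ 0 := by
    rw [neg_one_mul, neg_add_eq_sub]
    exact left_ne_zero_of_mul (h x hx ▸ hr)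
  refine ⟨hden, (eq_div_iff hden).2 ?_⟩
  linear_combination -h x hx

end Moebius

lemma exists_sq_eq_const_mul_of_hasDerivAt {𝕜 : Type*} [RCLike 𝕜] {U : Set 𝕜} (hU : IsOpen U)
    (hUconn : IsPreconnected U) {D h : 𝕜 → 𝕜} (hh : DifferentiableOn 𝕜 h U)
    (hh0 : ∀ z ∈ U, h z ≠ 0) (hD : ∀ z ∈ U, HasDerivAt D (D z * logDeriv h z / 2) z) :
    ∃ k, ∀ z ∈ U, D z ^ 2 = k * h z := by
  have hquot : ∀ z ∈ U, HasDerivAt (fun w ↦ D w ^ 2 / h w) 0 z := fun z hz ↦ by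
    have hhz := (hh.differentiableAt (hU.mem_nhds hz)).hasDerivAt
    refine (((hD z hz).fun_pow 2).fun_div hhz (hh0 z hz)).congr_deriv ?_
    have := hh0 z hz
    rw [logDeriv_apply]
    field_simp
    ring
  obtain ⟨k, hk⟩ := hU.exists_is_const_of_deriv_eq_zero hUconn
    (fun z hz ↦ (hquot z hz).differentiableAt.differentiableWithinAt) fun z hz ↦ (hquot z hz).deriv
  exact ⟨k, fun z hz ↦ (div_eq_iff (hh0 z hz)).1 (hk z hz)⟩

section PreSchwarzian

variable {f g : ℂ → ℂ} {U : Set ℂ} {z : ℂ}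

/-- The pre-Schwarzian derivative `P_f = f''/f'`. -/
noncomputable def preSchwarzian (f : ℂ → ℂ) : ℂ → ℂ :=
  logDeriv (deriv f)

lemma hasDerivAt_deriv_mul_preSchwarzian (hf : AnalyticAt ℂ f z) (hf' : deriv f z ≠ 0) :
    HasDerivAt (deriv f) (deriv f z * preSchwarzian f z) z := by
  rw [preSchwarzian, logDeriv_apply, mul_div_cancel₀ _ hf']
  exact hf.deriv.differentiableAt.hasDerivAt

lemma hasDerivAt_preSchwarzian (hf : AnalyticAt ℂ f z) (hf' : deriv f z ≠ 0) :
    HasDerivAt (preSchwarzian f) (schwarzian f z + preSchwarzian f z ^ 2 / 2) z := by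
  refine (hf.deriv.deriv.differentiableAt.hasDerivAt.div
    hf.deriv.differentiableAt.hasDerivAt hf').congr_deriv ?_
  simp only [schwarzian, preSchwarzian, logDeriv_apply, iteratedDeriv_succ, iteratedDeriv_zero]
  field_simp
  ring

lemma hasDerivAt_preSchwarzian_sub (hf : AnalyticAt ℂ f z) (hg : AnalyticAt ℂ g z)
    (hf' : deriv f z ≠ 0) (hg' : deriv g z ≠ 0) (hS : schwarzian f z = schwarzian g z) :
    HasDerivAt (fun w ↦ preSchwarzian g w - preSchwarzian f w)
      ((preSchwarzian g z - preSchwarzian f z) *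
        (preSchwarzian f z + preSchwarzian g z) / 2) z := by
  refine ((hasDerivAt_preSchwarzian hg hg').fun_sub
    (hasDerivAt_preSchwarzian hf hf')).congr_deriv ?_
  linear_combination -hS

lemma exists_sq_preSchwarzian_sub_eq (hU : IsOpen U) (hUconn : IsPreconnected U)
    (hf : AnalyticOnNhd ℂ f U) (hg : AnalyticOnNhd ℂ g U)
    (hf' : ∀ z ∈ U, deriv f z ≠ 0) (hg' : ∀ z ∈ U, deriv g z ≠ 0)
    (hS : ∀ z ∈ U, schwarzian f z = schwarzian g z) :
    ∃ k, ∀ z ∈ U, (preSchwarzian g z - preSchwarzian f z) ^ 2 = k * (deriv f z * deriv g z) := by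
  refine exists_sq_eq_const_mul_of_hasDerivAt hU hUconn
    (hf.deriv.differentiableOn.fun_mul hg.deriv.differentiableOn)
    (fun z hz ↦ mul_ne_zero (hf' z hz) (hg' z hz)) fun z hz ↦ ?_
  rw [logDeriv_mul z (hf' z hz) (hg' z hz) (hf z hz).deriv.differentiableAt
    (hg z hz).deriv.differentiableAt]
  exact hasDerivAt_preSchwarzian_sub (hf z hz) (hg z hz) (hf' z hz) (hg' z hz) (hS z hz)

lemma exists_eq_mul_add_of_preSchwarzian_eqOn (hU : IsOpen U) (hUconn : IsPreconnected U)
    (hf : AnalyticOnNhd ℂ f U) (hg : AnalyticOnNhd ℂ g U)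
    (hf' : ∀ z ∈ U, deriv f z ≠ 0) (hg' : ∀ z ∈ U, deriv g z ≠ 0)
    (hP : U.EqOn (preSchwarzian g) (preSchwarzian f)) :
    ∃ m b : ℂ, m ≠ 0 ∧ ∀ z ∈ U, g z = m * f z + b := by
  obtain ⟨m, hm, hderiv⟩ := (logDeriv_eqOn_iff hg.deriv.differentiableOn
    hf.deriv.differentiableOn hU hUconn hf' hg').1 hP
  have hderiv' : U.EqOn (deriv g) (deriv fun z ↦ m * f z) := fun z hz ↦ by
    rw [deriv_const_mul_field, hderiv hz, Pi.smul_apply, smul_eq_mul]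
  obtain ⟨b, hb⟩ := hU.exists_eq_add_of_deriv_eq hUconn hg.differentiableOn
    (hf.differentiableOn.const_mul m) hderiv'
  exact ⟨m, b, hm, hb⟩

/-- The pole `T⁻¹(∞)` of the Möbius transformation `T` for which `T ∘ f` and `g` have the same
2-jet at `z`. The formula is meaningful when the pre-Schwarzian derivatives differ at `z`; when
they agree, `T` is affine with pole `∞`, and the definition returns the junk value `f z`. -/
noncomputable def osculatingPole (f g : ℂ → ℂ) (z : ℂ) : ℂ :=
  f z + 2 * (deriv f z / (preSchwarzian g z - preSchwarzian f z))

lemma hasDerivAt_osculatingPole (hf : AnalyticAt ℂ f z) (hg : AnalyticAt ℂ g z)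
    (hf' : deriv f z ≠ 0) (hg' : deriv g z ≠ 0) (hS : schwarzian f z = schwarzian g z)
    (hP : preSchwarzian g z - preSchwarzian f z ≠ 0) : HasDerivAt (osculatingPole f g) 0 z := by
  have hquot := (hasDerivAt_deriv_mul_preSchwarzian hf hf').fun_div
    (hasDerivAt_preSchwarzian_sub hf hg hf' hg' hS) hP
  refine (hf.differentiableAt.hasDerivAt.fun_add (hquot.const_mul 2)).congr_deriv ?_
  field_simp
  ring

lemma exists_osculatingPole_eq (hU : IsOpen U) (hUconn : IsPreconnected U)
    (hf : AnalyticOnNhd ℂ f U) (hg : AnalyticOnNhd ℂ g U)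
    (hf' : ∀ z ∈ U, deriv f z ≠ 0) (hg' : ∀ z ∈ U, deriv g z ≠ 0)
    (hS : ∀ z ∈ U, schwarzian f z = schwarzian g z)
    (hP : ∀ z ∈ U, preSchwarzian g z - preSchwarzian f z ≠ 0) :
    ∃ p, ∀ z ∈ U, osculatingPole f g z = p := by
  have hderiv := fun z (hz : z ∈ U) ↦
    hasDerivAt_osculatingPole (hf z hz) (hg z hz) (hf' z hz) (hg' z hz) (hS z hz) (hP z hz)
  exact hU.exists_is_const_of_deriv_eq_zero hUconn
    (fun z hz ↦ (hderiv z hz).differentiableAt.differentiableWithinAt)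
    fun z hz ↦ (hderiv z hz).deriv

lemma osculatingPole_sub_mul_osculatingPole_sub (f g : ℂ → ℂ) (z : ℂ) :
    (osculatingPole f g z - f z) * (osculatingPole g f z - g z) =
      -4 * (deriv f z * deriv g z) / (preSchwarzian g z - preSchwarzian f z) ^ 2 := by
  rw [osculatingPole, osculatingPole, ← neg_sub (preSchwarzian g z) (preSchwarzian f z)]
  generalize preSchwarzian g z - preSchwarzian f z = D
  ring

lemma isMoebiusPostcompOn_of_sq_preSchwarzian_sub_eq (hU : IsOpen U) (hUconn : IsPreconnected U)
    (hf : AnalyticOnNhd ℂ f U) (hg : AnalyticOnNhd ℂ g U)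
    (hf' : ∀ z ∈ U, deriv f z ≠ 0) (hg' : ∀ z ∈ U, deriv g z ≠ 0)
    (hS : ∀ z ∈ U, schwarzian f z = schwarzian g z) {k : ℂ} (hk0 : k ≠ 0)
    (hk : ∀ z ∈ U, (preSchwarzian g z - preSchwarzian f z) ^ 2 = k * (deriv f z * deriv g z)) :
    IsMoebiusPostcompOn f g U := by
  have hfg' : ∀ z ∈ U, deriv f z * deriv g z ≠ 0 := fun z hz ↦ mul_ne_zero (hf' z hz) (hg' z hz)
  have hP : ∀ z ∈ U, preSchwarzian g z - preSchwarzian f z ≠ 0 := fun z hz ↦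
    (pow_ne_zero_iff two_ne_zero).1 (hk z hz ▸ mul_ne_zero hk0 (hfg' z hz))
  obtain ⟨p, hp⟩ := exists_osculatingPole_eq hU hUconn hf hg hf' hg' hS hP
  obtain ⟨q, hq⟩ := exists_osculatingPole_eq hU hUconn hg hf hg' hf' (fun z hz ↦ (hS z hz).symm)
    fun z hz ↦ sub_ne_zero.2 (sub_ne_zero.1 (hP z hz)).symm
  refine isMoebiusPostcompOn_of_sub_mul_sub_eq (p := p) (q := q) (r := -4 / k)
    (div_ne_zero (by norm_num) hk0) fun z hz ↦ ?_
  rw [← hp z hz, ← hq z hz, osculatingPole_sub_mul_osculatingPole_sub, hk z hz,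
    mul_div_mul_right _ _ (hfg' z hz)]

end PreSchwarzian

/-- Two locally univalent holomorphic functions on a nonempty connected open set with the
same Schwarzian derivative differ by post-composition with a Möbius transformation. -/
theorem eq_schwarzian_iff_moebius_postcomp (U : Set ℂ) (hU : IsOpen U)
    (hUconn : IsConnected U)
    (f g : ℂ → ℂ) (hf : DifferentiableOn ℂ f U) (hg : DifferentiableOn ℂ g U)
    (hf' : ∀ z ∈ U, deriv f z ≠ 0) (hg' : ∀ z ∈ U, deriv g z ≠ 0)
    (hS : ∀ z ∈ U, schwarzian f z = schwarzian g z) :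
    ∃ a b c d : ℂ, a * d - b * c = 1 ∧
      ∀ z ∈ U, c * f z + d ≠ 0 ∧ g z = (a * f z + b) / (c * f z + d) := by
  replace hf := hf.analyticOnNhd hU
  replace hg := hg.analyticOnNhd hU
  have hUpre := hUconn.isPreconnected
  obtain ⟨k, hk⟩ := exists_sq_preSchwarzian_sub_eq hU hUpre hf hg hf' hg' hS
  apply IsMoebiusPostcompOn.exists_det_eq_one
  obtain rfl | hk0 := eq_or_ne k 0
  · have hP : U.EqOn (preSchwarzian g) (preSchwarzian f) := fun z hz ↦
      sub_eq_zero.1 (sq_eq_zero_iff.1 ((hk z hz).trans (zero_mul _)))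
    obtain ⟨m, b, hm, hg_eq⟩ :=
      exists_eq_mul_add_of_preSchwarzian_eqOn hU hUpre hf hg hf' hg' hP
    exact isMoebiusPostcompOn_of_eq_mul_add hm hg_eq
  · exact isMoebiusPostcompOn_of_sq_preSchwarzian_sub_eq hU hUpre hf hg hf' hg' hS hk0 hk
end
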